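/- arXiv:2512.04633 — 2 statements merged into one kernel-verified Lean document; each statement's English description precedes it below -/
import Mathlib

section
/- Let K ⊆ ℝ² be a Minkowski centered convex body. Then 2/(s(K)+1) ≤ τ(K) ≤ c(s(K)). -/
open scoped Pointwise RealInnerProductSpace
open Set

noncomputable section

abbrev E2 := EuclideanSpace ℝ (Fin 2)

/-- A convex body: compact convex set with nonempty interior. -/
def IsConvexBody (K : Set E2) : Prop :=
  Convex ℝ K ∧ IsCompact K ∧ (interior K).Nonempty

/-- circumradius `R(K,C)` -/
def circum (K C : Set E2) : ℝ :=
  sInf {ρ : ℝ | 0 < ρ ∧ ∃ t : E2, K ⊆ ρ • C + {t}}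

/-- inradius `r(K,C)` -/
def inrad (K C : Set E2) : ℝ :=
  sSup {ρ : ℝ | 0 < ρ ∧ ∃ t : E2, ρ • C + {t} ⊆ K}

/-- width `w(K,C)` -/
def widthB (K C : Set E2) : ℝ := 2 * inrad (K - K) (C - C)

/-- diameter `D(K,C)` -/
def diamB (K C : Set E2) : ℝ := 2 * circum (K - K) (C - C)

/-- Minkowski asymmetry `s(K)` -/
def minkAsym (K : Set E2) : ℝ :=
  sInf {ρ : ℝ | 0 < ρ ∧ ∃ c : E2, K - {c} ⊆ ρ • ({c} - K)}

/-- `K` is Minkowski centered -/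
def MinkCentered (K : Set E2) : Prop := K ⊆ minkAsym K • (-K)

/-- `τ(K)`: smallest `ρ > 0` with `K ∩ (-K) ⊆ ρ • ((K-K)/2)` -/
def tauB (K : Set E2) : ℝ :=
  sInf {ρ : ℝ | 0 < ρ ∧ K ∩ (-K) ⊆ ρ • ((2:ℝ)⁻¹ • (K - K))}

/-- golden ratio -/
def phiR : ℝ := (1 + Real.sqrt 5) / 2

def cExpr2 (s : ℝ) : ℝ :=
  (s^2+1)^2 / ((s^2-1) * (s^2+2*s-1+2*Real.sqrt (s*(s^2-1))))

def cExpr3 (s : ℝ) : ℝ := 2*(s^2-2*s-1) / ((s-3)*(s+1))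

/-- `ŝ`: the unique `s ∈ (φ,2)` where the two expressions agree. -/
def sHat : ℝ := sInf {s : ℝ | phiR < s ∧ s < 2 ∧ cExpr2 s = cExpr3 s}

def cFun (s : ℝ) : ℝ :=
  if s ≤ phiR then 1 else if s ≤ sHat then cExpr2 s else cExpr3 s

/-- polar body -/
def polarBody (K : Set E2) : Set E2 := {y | ∀ x ∈ K, (inner ℝ x y : ℝ) ≤ 1}

/-- `γ(K)` -/
def gammaB (K : Set E2) : ℝ :=
  sInf {ρ : ℝ | 0 < ρ ∧
    polarBody ((2:ℝ)⁻¹ • (polarBody K - polarBody K)) ⊆ ρ • convexHull ℝ (K ∪ -K)}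

/-- positive hull of two points -/
def posHull2 (a b : E2) : Set E2 := {x | ∃ α β : ℝ, 0 ≤ α ∧ 0 ≤ β ∧ x = α • a + β • b}

/-- asymmetry point of `K`: a point of `bd(K) ∩ bd(−(1/s(K))·K)` -/
def IsAsymPoint (K : Set E2) (p : E2) : Prop :=
  p ∈ frontier K ∧ p ∈ frontier ((-(minkAsym K)⁻¹) • K)

/-- a well-spread triple of asymmetry points -/
def WellSpread (K : Set E2) (p1 p2 p3 : E2) : Prop :=
  IsAsymPoint K p1 ∧ IsAsymPoint K p2 ∧ IsAsymPoint K p3 ∧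
  ∃ a1 a2 a3 : E2, a1 ≠ 0 ∧ a2 ≠ 0 ∧ a3 ≠ 0 ∧
    (∀ x ∈ K, (inner ℝ a1 x : ℝ) ≤ inner ℝ a1 p1) ∧
    (∀ x ∈ K, (inner ℝ a2 x : ℝ) ≤ inner ℝ a2 p2) ∧
    (∀ x ∈ K, (inner ℝ a3 x : ℝ) ≤ inner ℝ a3 p3) ∧
    (0:E2) ∈ interior (convexHull ℝ {p1, p2, p3}) ∧
    (0:E2) ∈ convexHull ℝ {a1, a2, a3}

/-- two points of `bd(K) ∩ bd(-K)` are consecutive -/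
def Consecutive (K : Set E2) (z1 z2 : E2) : Prop :=
  ¬ ∃ z, z ∈ frontier K ∩ frontier (-K) ∧ z ∈ interior (posHull2 z1 z2)

/-- point of the plane from coordinates -/
def pt (x y : ℝ) : E2 := (WithLp.equiv 2 (Fin 2 → ℝ)).symm ![x, y]

/-- the golden house -/
def goldenHouse : Set E2 :=
  convexHull ℝ {pt 1 0, pt (-1) 0, pt 1 (-1), pt (-1) (-1), pt 0 phiR}

/-!
Support functions turn inclusions of compact convex sets into inequalities. Write `s` for the
Minkowski asymmetry of `K`.

For the lower bound, `s⁻¹ • K ⊆ K ∩ -K`, so a small `τ` would make `K` less asymmetric about the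
origin than `s` allows.

For the upper bound, optimality of `s` yields, by Carathéodory, three normals `a i` of `K` with
`∑ L i • a i = 0` for convex weights `L i ≤ 1 / (s + 1)`, and points `p i` on the lines
`⟪a i, x⟫ = 1` with `-s • p i ∈ K`. Subtracting a multiple of this relation writes any linear
functional as `α • a i - β • a j` with `α, β ≥ 0`. Bounding the width of `K` from below with the
points `±z` and `-s • p i`, `-s • p j` for `z ∈ K ∩ -K` compares `⟪v, z⟫` with the width through the
quotient `(s - d) * (s * d + 1) / ((s ^ 2 - 1) * (1 + d))`, where `d = (L i - L j) / L k ≤ 2 - s`.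
Its maximum over these `d` is `c(s)`.
-/
section ConvexHull

lemma convexHull_range_eq_image_stdSimplex {ι V : Type*} [Fintype ι] [AddCommGroup V] [Module ℝ V]
    (z : ι → V) :
    convexHull ℝ (range z) = Fintype.linearCombination ℝ z '' stdSimplex ℝ ι := by
  classical
  rw [← convexHull_rangle_single_eq_stdSimplex, LinearMap.image_convexHull, ← range_comp]
  congr 2
  funext i
  simp

variable {ι V : Type*} [Fintype ι] [AddCommGroup V] [Module ℝ V] [FiniteDimensional ℝ V]

lemma exists_mem_convexHull_range_of_finrank_lt_card (hι : Module.finrank ℝ V < Fintype.card ι)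
    {Z : Set V} {x : V} (hx : x ∈ convexHull ℝ Z) :
    ∃ z : ι → V, (∀ i, z i ∈ Z) ∧ x ∈ convexHull ℝ (range z) := by
  obtain ⟨κ, _, z, w, hz, hind, hw0, hw1, hsum⟩ := eq_pos_convex_span_of_mem_convexHull hx
  have hcard : Fintype.card κ ≤ Fintype.card ι :=
    (hind.card_le_finrank_succ.trans (Nat.succ_le_succ (Submodule.finrank_le _))).trans hι
  have : Nonempty κ := by
    by_contra h
    rw [not_nonempty_iff] at h
    simp at hw1
  obtain ⟨e⟩ := Function.Embedding.nonempty_of_card_le hcard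
  refine ⟨z ∘ Function.invFun e, fun i => hz ⟨_, rfl⟩, ?_⟩
  rw [(Function.invFun_surjective e.injective).range_comp, convexHull_range_eq_image_stdSimplex]
  exact ⟨w, ⟨fun i => (hw0 i).le, hw1⟩, hsum⟩

lemma isCompact_convexHull_of_isCompact [TopologicalSpace V] [IsTopologicalAddGroup V]
    [ContinuousSMul ℝ V] {Z : Set V} (hZ : IsCompact Z) : IsCompact (convexHull ℝ Z) := by
  let ι := Fin (Module.finrank ℝ V + 1)
  have himage : convexHull ℝ Z = (fun q : (ι → ℝ) × (ι → V) => ∑ i, q.1 i • q.2 i) ''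
      (stdSimplex ℝ ι ×ˢ univ.pi fun _ => Z) := by
    refine Subset.antisymm (fun x hx => ?_) ?_
    · obtain ⟨z, hz, hxz⟩ :=
        exists_mem_convexHull_range_of_finrank_lt_card (ι := ι) (by simp [ι]) hx
      rw [convexHull_range_eq_image_stdSimplex] at hxz
      obtain ⟨w, hw, rfl⟩ := hxz
      exact ⟨(w, z), ⟨hw, fun i _ => hz i⟩, rfl⟩
    · rintro _ ⟨⟨w, z⟩, ⟨hw, hz⟩, rfl⟩
      exact (convex_convexHull ℝ Z).sum_mem (fun i _ => hw.1 i) hw.2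
        fun i _ => subset_convexHull ℝ Z (hz i trivial)
  rw [himage]
  exact ((isCompact_stdSimplex ℝ ι).prod (isCompact_univ_pi fun _ => hZ)).image (by fun_prop)

end ConvexHull

open Filter Topology in
lemma eventually_forall_pos_add_mul {X : Type*} [TopologicalSpace X] {S : Set X}
    (hS : IsCompact S) {g f : X → ℝ} (hg : Continuous g) (hf : Continuous f)
    (hg0 : ∀ x ∈ S, 0 ≤ g x) (hf0 : ∀ x ∈ S, g x = 0 → 0 < f x) :
    ∀ᶠ ε : ℝ in 𝓝[>] 0, ∀ x ∈ S, 0 < g x + ε * f x := by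
  have hnear : ∀ᶠ ε : ℝ in 𝓝 0, ∀ x ∈ S, 0 < ε → x ∈ S → 0 < g x + ε * f x := by
    refine hS.eventually_forall_of_forall_eventually fun x hx => ?_
    rcases (hg0 x hx).eq_or_lt with hgx | hgx
    · have hfx : ∀ᶠ q : ℝ × X in 𝓝 (0, x), 0 < f q.2 :=
        (hf.comp continuous_snd).continuousAt.eventually_const_lt (hf0 x hx hgx.symm)
      filter_upwards [hfx] with q hq hε hqS
      exact add_pos_of_nonneg_of_pos (hg0 _ hqS) (mul_pos hε hq)
    · have hcont : ContinuousAt (fun q : ℝ × X => g q.2 + q.1 * f q.2) (0, x) := by fun_prop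
      filter_upwards [hcont.eventually_const_lt (by simpa using hgx)] with q hq _ _
      exact hq
  filter_upwards [hnear.filter_mono nhdsWithin_le_nhds, self_mem_nhdsWithin] with ε h hε x hx
  exact h x hx hε hx

section SupportFunction

variable {E : Type*} [NormedAddCommGroup E] [InnerProductSpace ℝ E]

/-- The support function `h_K(u) = max_{x ∈ K} ⟪u, x⟫`, which encodes inclusions between compact
convex sets as inequalities. It takes the junk value `0` when `K` is empty or unbounded in
direction `u`. -/
def supportFun (K : Set E) (u : E) : ℝ := sSup ((fun x => ⟪u, x⟫) '' K)

variable {K C : Set E}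

lemma isCompact_image_inner (hK : IsCompact K) (u : E) : IsCompact ((fun x => ⟪u, x⟫) '' K) :=
  hK.image (by fun_prop)

lemma continuous_supportFun (hK : IsCompact K) : Continuous (supportFun K) :=
  hK.continuous_sSup (f := fun u x : E => ⟪u, x⟫) continuous_inner

lemma inner_le_supportFun (hK : IsCompact K) (u : E) {x : E} (hx : x ∈ K) :
    ⟪u, x⟫ ≤ supportFun K u :=
  le_csSup (isCompact_image_inner hK u).bddAbove ⟨x, hx, rfl⟩

lemma exists_inner_eq_supportFun (hK : IsCompact K) (hne : K.Nonempty) (u : E) :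
    ∃ x ∈ K, ⟪u, x⟫ = supportFun K u :=
  (isCompact_image_inner hK u).sSup_mem (hne.image _)

lemma supportFun_mono (hC : IsCompact C) (hne : K.Nonempty) (h : K ⊆ C) (u : E) :
    supportFun K u ≤ supportFun C u :=
  csSup_le_csSup (isCompact_image_inner hC u).bddAbove (hne.image _) (image_mono h)

lemma supportFun_singleton (c u : E) : supportFun {c} u = ⟪u, c⟫ := by
  simp [supportFun]

lemma supportFun_neg (K : Set E) (u : E) : supportFun (-K) u = supportFun K (-u) := by
  simp only [supportFun, ← image_neg_eq_neg, image_image, inner_neg_left, inner_neg_right]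

lemma supportFun_smul {c : ℝ} (hc : 0 ≤ c) (K : Set E) (u : E) :
    supportFun (c • K) u = c * supportFun K u := by
  rw [supportFun, image_smul_comm _ _ _ fun x => by rw [inner_smul_right, smul_eq_mul],
    Real.sSup_smul_of_nonneg hc, smul_eq_mul, supportFun]

lemma supportFun_add (hK : IsCompact K) (hKne : K.Nonempty) (hC : IsCompact C) (hCne : C.Nonempty)
    (u : E) : supportFun (K + C) u = supportFun K u + supportFun C u := by
  rw [supportFun, show (fun x => ⟪u, x⟫) = innerSL ℝ u from rfl, image_add]
  exact csSup_add (hKne.image _) (isCompact_image_inner hK u).bddAbove (hCne.image _)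
    (isCompact_image_inner hC u).bddAbove

lemma supportFun_sub (hK : IsCompact K) (hKne : K.Nonempty) (hC : IsCompact C) (hCne : C.Nonempty)
    (u : E) : supportFun (K - C) u = supportFun K u + supportFun C (-u) := by
  rw [sub_eq_add_neg, supportFun_add hK hKne hC.neg hCne.neg, supportFun_neg]

lemma supportFun_add_supportFun_neg_pos (hK : IsCompact K) (hint : (interior K).Nonempty)
    {u : E} (hu : u ≠ 0) : 0 < supportFun K u + supportFun K (-u) := by
  obtain ⟨x, hx⟩ := hint
  have hline : ContinuousAt (fun t : ℝ => x + t • u) 0 := by fun_prop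
  have hmem : ∀ᶠ t : ℝ in nhds 0, x + t • u ∈ K :=
    hline (by simpa using mem_interior_iff_mem_nhds.1 hx)
  obtain ⟨t, htK, ht⟩ :=
    ((hmem.filter_mono nhdsWithin_le_nhds).and (self_mem_nhdsWithin (s := Ioi (0 : ℝ)))).exists
  have hfar := inner_le_supportFun hK u htK
  have hnear := inner_le_supportFun hK (-u) (interior_subset hx)
  rw [inner_add_right, inner_smul_right] at hfar
  rw [inner_neg_left] at hnear
  have := mul_pos ht (real_inner_self_pos.2 hu)
  linarith

variable [CompleteSpace E]

lemma mem_of_forall_inner_le_supportFun (hconv : Convex ℝ C) (hC : IsCompact C) (hne : C.Nonempty)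
    {x : E} (h : ∀ u : E, ‖u‖ = 1 → ⟪u, x⟫ ≤ supportFun C u) : x ∈ C := by
  by_contra hx
  obtain ⟨f, t, hft, htx⟩ := geometric_hahn_banach_closed_point hconv hC.isClosed hx
  obtain ⟨v, rfl⟩ := (InnerProductSpace.toDual ℝ E).surjective f
  simp only [InnerProductSpace.toDual_apply_apply] at hft htx
  have hv : v ≠ 0 := by
    rintro rfl
    obtain ⟨y, hy⟩ := hne
    have := (hft y hy).trans htx
    simp at this
  obtain ⟨y, hy, hyu⟩ := exists_inner_eq_supportFun hC hne (‖v‖⁻¹ • v)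
  have hxu := h (‖v‖⁻¹ • v) (norm_smul_inv_norm hv)
  rw [← hyu, real_inner_smul_left, real_inner_smul_left] at hxu
  have := le_of_mul_le_mul_left hxu (inv_pos.2 (norm_pos_iff.2 hv))
  linarith [hft y hy]

lemma subset_of_supportFun_le (hconv : Convex ℝ C) (hC : IsCompact C) (hne : C.Nonempty)
    (hK : IsCompact K) (h : ∀ u : E, ‖u‖ = 1 → supportFun K u ≤ supportFun C u) : K ⊆ C :=
  fun _ hx => mem_of_forall_inner_le_supportFun hconv hC hne fun u hu =>
    (inner_le_supportFun hK u hx).trans (h u hu)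

end SupportFunction
section Contact

lemma zero_mem_convexHull_of_forall_exists_pos_smul_mem {V : Type*} [AddCommGroup V] [Module ℝ V]
    {Z W : Set V} (h0 : (0 : V) ∈ convexHull ℝ Z) (h : ∀ u ∈ Z, ∃ c > (0 : ℝ), c • u ∈ W) :
    (0 : V) ∈ convexHull ℝ W := by
  obtain ⟨ι, _, w, z, hw0, hw1, hz, hsum⟩ := mem_convexHull_iff_exists_fintype.1 h0
  choose c hc hcW using fun i => h (z i) (hz i)
  have hnonneg : ∀ i ∈ Finset.univ, 0 ≤ w i / c i := fun i _ => div_nonneg (hw0 i) (hc i).le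
  obtain ⟨i, hi, hwi⟩ : ∃ i ∈ Finset.univ, 0 < w i :=
    Finset.exists_lt_of_sum_lt (by simp [hw1])
  have hpos : 0 < ∑ i, w i / c i := Finset.sum_pos' hnonneg ⟨i, hi, div_pos hwi (hc i)⟩
  have hcenter : Finset.univ.centerMass (fun i => w i / c i) (fun i => c i • z i) = 0 := by
    simp_rw [Finset.centerMass, smul_smul, div_mul_cancel₀ _ (hc _).ne', hsum, smul_zero]
  exact hcenter ▸ Finset.univ.centerMass_mem_convexHull hnonneg hpos fun i _ => hcW i

variable {E : Type*} [NormedAddCommGroup E] [InnerProductSpace ℝ E] {K : Set E} {s : ℝ}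

lemma supportFun_neg_le_mul_supportFun (hK : IsCompact K) (hne : K.Nonempty) (hs : 0 ≤ s)
    (hsub : K ⊆ s • -K) (u : E) : supportFun K (-u) ≤ s * supportFun K u := by
  have := supportFun_mono (hK.neg.smul s) hne hsub (-u)
  rwa [supportFun_smul hs, supportFun_neg, neg_neg] at this

lemma supportFun_pos_of_subset_smul_neg (hK : IsCompact K) (hint : (interior K).Nonempty)
    (hs : 0 ≤ s) (hsub : K ⊆ s • -K) {u : E} (hu : u ≠ 0) : 0 < supportFun K u := by
  have hwidth := supportFun_add_supportFun_neg_pos hK hint hu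
  have := supportFun_neg_le_mul_supportFun hK (hint.mono interior_subset) hs hsub u
  exact pos_of_mul_pos_right (a := 1 + s) (by linarith) (by linarith)

lemma one_le_of_subset_smul_neg [Nontrivial E] (hK : IsCompact K) (hint : (interior K).Nonempty)
    (hs : 0 ≤ s) (hsub : K ⊆ s • -K) : 1 ≤ s := by
  obtain ⟨u, hu⟩ := exists_ne (0 : E)
  have hne : K.Nonempty := hint.mono interior_subset
  have hwidth := supportFun_add_supportFun_neg_pos hK hint hu
  have hneg := supportFun_neg_le_mul_supportFun hK hne hs hsub u
  have hpos := supportFun_neg_le_mul_supportFun hK hne hs hsub (-u)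
  rw [neg_neg] at hpos
  refine le_of_mul_le_mul_right (?_ : 1 * _ ≤ s * _) hwidth
  linarith

lemma sub_singleton_subset_of_supportFun_le [CompleteSpace E] (hconv : Convex ℝ K)
    (hK : IsCompact K) (hne : K.Nonempty) (hs : 0 ≤ s) {c : E}
    (h : ∀ u : E, ‖u‖ = 1 → supportFun K (-u) + ⟪u, c⟫ ≤ s * (supportFun K u - ⟪u, c⟫)) :
    K - {c} ⊆ s • ({c} - K) := by
  have hsub : IsCompact (K - {c}) := sub_eq_add_neg K {c} ▸ hK.add isCompact_singleton.neg
  have hsub' : IsCompact ({c} - K) := sub_eq_add_neg {c} K ▸ isCompact_singleton.add hK.neg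
  refine subset_of_supportFun_le (((convex_singleton c).sub hconv).smul s) (hsub'.smul s)
    ((singleton_nonempty c).sub hne).smul_set hsub fun u hu => ?_
  have hc := singleton_nonempty c
  rw [supportFun_smul hs, supportFun_sub hK hne isCompact_singleton hc,
    supportFun_sub isCompact_singleton hc hK hne, supportFun_singleton, supportFun_singleton]
  have := h (-u) (by rwa [norm_neg])
  simp only [neg_neg, inner_neg_left] at this ⊢
  linarith

/-- Unit directions in which `K` touches the boundary of `-s • K` from inside, the active
constraints of the minimisation problem defining the Minkowski asymmetry. -/
def contactDirections (K : Set E) (s : ℝ) : Set E :=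
  {u | ‖u‖ = 1 ∧ supportFun K (-u) = s * supportFun K u}

/-- Outer normals `a` of `K`, scaled to support value `1`, that support `K` at a point `p` whose
opposite `-s • p` also lies in `K`. Membership of `p` itself is left out, being automatic when
`K ⊆ -s • K`. -/
def contactNormals (K : Set E) (s : ℝ) : Set E :=
  {a | (∀ x ∈ K, ⟪a, x⟫ ≤ 1) ∧ ∃ p, -(s • p) ∈ K ∧ ⟪a, p⟫ = 1}

lemma exists_pos_smul_mem_contactNormals (hK : IsCompact K) (hint : (interior K).Nonempty)
    (hs : 0 < s) (hsub : K ⊆ s • -K) {u : E} (hu : u ∈ contactDirections K s) :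
    ∃ c > (0 : ℝ), c • u ∈ contactNormals K s := by
  have hpos : 0 < supportFun K u :=
    supportFun_pos_of_subset_smul_neg hK hint hs.le hsub (norm_pos_iff.1 (by simp [hu.1]))
  refine ⟨(supportFun K u)⁻¹, inv_pos.2 hpos, fun x hx => ?_, ?_⟩
  · rw [real_inner_smul_left, inv_mul_le_iff₀ hpos, mul_one]
    exact inner_le_supportFun hK u hx
  · obtain ⟨x, hx, hxu⟩ := exists_inner_eq_supportFun hK (hint.mono interior_subset) (-u)
    obtain ⟨y, -, rfl⟩ := hsub hx
    refine ⟨-y, by simpa using hx, ?_⟩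
    have hyu : s * ⟪u, -y⟫ = s * supportFun K u := by
      rw [← hu.2, ← hxu]
      simp [inner_smul_right]
    rw [real_inner_smul_left, mul_left_cancel₀ hs.ne' hyu, inv_mul_cancel₀ hpos.ne']

variable [FiniteDimensional ℝ E]

lemma isCompact_contactDirections (hK : IsCompact K) (s : ℝ) :
    IsCompact (contactDirections K s) := by
  have := continuous_supportFun hK
  have hsphere : {u : E | ‖u‖ = 1} = Metric.sphere 0 1 := by ext; simp
  refine IsCompact.inter_right (s := {u | ‖u‖ = 1}) (hsphere ▸ isCompact_sphere 0 1) ?_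
  exact isClosed_eq (by fun_prop) (by fun_prop)

lemma exists_lt_sub_singleton_subset (hconv : Convex ℝ K) (hK : IsCompact K) (hne : K.Nonempty)
    (hs : 0 < s) {c : E}
    (h : ∀ u : E, ‖u‖ = 1 → supportFun K (-u) + ⟪u, c⟫ < s * (supportFun K u - ⟪u, c⟫)) :
    ∃ ρ, 0 < ρ ∧ ρ < s ∧ K - {c} ⊆ ρ • ({c} - K) := by
  have := continuous_supportFun hK
  obtain ⟨δ, hδ, hδ0, hδs⟩ := ((eventually_forall_pos_add_mul (isCompact_sphere (0 : E) 1)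
    (g := fun u => s * (supportFun K u - ⟪u, c⟫) - (supportFun K (-u) + ⟪u, c⟫))
    (f := fun u => -(supportFun K u - ⟪u, c⟫)) (by fun_prop) (by fun_prop)
    (fun u hu => (sub_pos.2 (h u (by simpa using hu))).le)
    (fun u hu hu0 => absurd hu0 (sub_pos.2 (h u (by simpa using hu))).ne')).and
    (Ioo_mem_nhdsGT hs)).exists
  refine ⟨s - δ, sub_pos.2 hδs, sub_lt_self s hδ0,
    sub_singleton_subset_of_supportFun_le hconv hK hne (sub_pos.2 hδs).le fun u hu => ?_⟩
  linarith [hδ u (by simpa using hu)]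

-- If `0` were separated from all contact directions by `v`, translating `K` a little along `v`
-- would make every constraint inactive, so that a smaller `s` would do.
lemma zero_mem_convexHull_contactDirections (hconv : Convex ℝ K) (hK : IsCompact K)
    (hne : K.Nonempty) (hs : 0 < s) (hsub : K ⊆ s • -K)
    (hmin : ∀ ρ, 0 < ρ → ∀ c, K - {c} ⊆ ρ • ({c} - K) → s ≤ ρ) :
    (0 : E) ∈ convexHull ℝ (contactDirections K s) := by
  by_contra h0
  obtain ⟨f, t, ht0, htf⟩ := geometric_hahn_banach_point_closed (convex_convexHull ℝ _)
    (isCompact_convexHull_of_isCompact (isCompact_contactDirections hK s)).isClosed h0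
  obtain ⟨v, rfl⟩ := (InnerProductSpace.toDual ℝ E).surjective f
  rw [map_zero] at ht0
  have hv : ∀ u ∈ contactDirections K s, 0 < ⟪u, v⟫ := fun u hu => by
    rw [real_inner_comm]
    exact ht0.trans (htf u (subset_convexHull ℝ _ hu))
  have := continuous_supportFun hK
  obtain ⟨ε, hε⟩ := (eventually_forall_pos_add_mul (isCompact_sphere (0 : E) 1)
    (g := fun u => s * supportFun K u - supportFun K (-u)) (f := fun u => (1 + s) * ⟪u, v⟫)
    (by fun_prop) (by fun_prop)
    (fun u _ => sub_nonneg.2 (supportFun_neg_le_mul_supportFun hK hne hs.le hsub u))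
    (fun u hu hu0 => mul_pos (by linarith)
      (hv u ⟨by simpa using hu, (sub_eq_zero.1 hu0).symm⟩))).exists
  obtain ⟨ρ, hρ0, hρs, hρ⟩ := exists_lt_sub_singleton_subset (c := -(ε • v)) hconv hK hne hs
    fun u hu => by
      rw [inner_neg_right, real_inner_smul_right]
      linarith [hε u (by simpa using hu)]
  exact hρs.not_ge (hmin ρ hρ0 _ hρ)

/-- A finite optimality certificate for `K ⊆ -s • K`: contact normals `a i` at points `p i`
together with convex weights `L i` that balance the normals. -/
structure IsContactSystem {ι : Type*} [Fintype ι] {E : Type*} [NormedAddCommGroup E]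
    [InnerProductSpace ℝ E] (K : Set E) (s : ℝ) (a p : ι → E) (L : ι → ℝ) : Prop where
  weight_mem : L ∈ stdSimplex ℝ ι
  sum_smul_eq_zero : ∑ i, L i • a i = 0
  inner_le_one : ∀ i, ∀ x ∈ K, ⟪a i, x⟫ ≤ 1
  neg_smul_mem : ∀ i, -(s • p i) ∈ K
  inner_eq_one : ∀ i, ⟪a i, p i⟫ = 1

lemma exists_isContactSystem {ι : Type*} [Fintype ι] (hι : Module.finrank ℝ E < Fintype.card ι)
    (hconv : Convex ℝ K) (hK : IsCompact K) (hint : (interior K).Nonempty) (hs : 0 < s)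
    (hsub : K ⊆ s • -K) (hmin : ∀ ρ, 0 < ρ → ∀ c, K - {c} ⊆ ρ • ({c} - K) → s ≤ ρ) :
    ∃ (a p : ι → E) (L : ι → ℝ), IsContactSystem K s a p L := by
  have h0 : (0 : E) ∈ convexHull ℝ (contactNormals K s) :=
    zero_mem_convexHull_of_forall_exists_pos_smul_mem
      (zero_mem_convexHull_contactDirections hconv hK (hint.mono interior_subset) hs hsub hmin)
      fun _ => exists_pos_smul_mem_contactNormals hK hint hs hsub
  obtain ⟨a, ha, h0a⟩ := exists_mem_convexHull_range_of_finrank_lt_card hι h0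
  rw [convexHull_range_eq_image_stdSimplex] at h0a
  obtain ⟨L, hL, hLa⟩ := h0a
  choose hle p hneg hone using ha
  exact ⟨a, p, L, hL, hLa, hle, hneg, hone⟩

end Contact
section BoundFunction

lemma one_lt_of_phiR_lt {s : ℝ} (h : phiR < s) : 1 < s :=
  Real.one_lt_goldenRatio.trans h

lemma cExpr2_mul_sq_sub_one {s : ℝ} (hs : 1 < s) :
    cExpr2 s * (s ^ 2 - 1) = s ^ 2 + 2 * s - 1 - 2 * √(s * (s ^ 2 - 1)) := by
  have hs2 : 0 < s ^ 2 - 1 := by nlinarith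
  have hsqrt : √(s * (s ^ 2 - 1)) ^ 2 = s * (s ^ 2 - 1) := Real.sq_sqrt (by positivity)
  have hden : 0 < s ^ 2 + 2 * s - 1 + 2 * √(s * (s ^ 2 - 1)) := by
    linarith [Real.sqrt_nonneg (s * (s ^ 2 - 1))]
  rw [cExpr2, div_mul_eq_mul_div, div_eq_iff (by positivity)]
  linear_combination 4 * (s ^ 2 - 1) * hsqrt

lemma cExpr3_mul_sq_sub_one {s : ℝ} (hs : 1 < s) (hs2 : s ≤ 2) :
    cExpr3 s * (s ^ 2 - 1) * (3 - s) = 2 * (s - 1) * (1 + 2 * s - s ^ 2) := by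
  have : s - 3 ≠ 0 := by linarith
  have : s + 1 ≠ 0 := by linarith
  rw [cExpr3]
  field_simp
  ring

lemma cExpr2_eq_cExpr3_iff {s : ℝ} (hs : 1 < s) (hs2 : s ≤ 2) :
    cExpr2 s = cExpr3 s ↔ s * (3 - s) ^ 2 - (s ^ 2 - 1) = 0 := by
  have hq : 0 < s ^ 2 - 1 := by nlinarith
  have hsqrt : √(s * (s ^ 2 - 1)) ^ 2 = s * (s ^ 2 - 1) := Real.sq_sqrt (by positivity)
  have h2 := cExpr2_mul_sq_sub_one hs
  have h3 := cExpr3_mul_sq_sub_one hs hs2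
  have hcancel : (s ^ 2 - 1) * (3 - s) ≠ 0 := mul_ne_zero hq.ne' (by linarith)
  set w := √(s * (s ^ 2 - 1))
  have hdiff : s * ((cExpr2 s - cExpr3 s) * ((s ^ 2 - 1) * (3 - s))) = (s * (3 - s) - w) ^ 2 := by
    linear_combination s * (3 - s) * h2 - s * h3 - hsqrt
  have hw : s * (3 - s) - w = 0 ↔ s * (3 - s) ^ 2 - (s ^ 2 - 1) = 0 := by
    have hfactor : s * (s * (3 - s) ^ 2 - (s ^ 2 - 1)) =
        (s * (3 - s) - w) * (s * (3 - s) + w) := by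
      linear_combination hsqrt
    have hpos : s * (3 - s) + w ≠ 0 := by
      have : 0 < s * (3 - s) := mul_pos (by linarith) (by linarith)
      linarith [Real.sqrt_nonneg (s * (s ^ 2 - 1))]
    rw [← mul_eq_zero_iff_left (b := s * (3 - s) ^ 2 - (s ^ 2 - 1)) (by linarith : s ≠ 0),
      hfactor, mul_eq_zero_iff_right hpos]
  rw [← hw, ← sq_eq_zero_iff, ← hdiff, ← sub_eq_zero]
  simp [hcancel, (by linarith : s ≠ 0)]

lemma antitoneOn_crossing_polynomial :
    AntitoneOn (fun s : ℝ => s * (3 - s) ^ 2 - (s ^ 2 - 1)) (Icc 1 2) := by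
  rintro t ⟨ht1, ht2⟩ s ⟨hs1, hs2⟩ hts
  have hslope : s ^ 2 + s * t + t ^ 2 - 7 * (s + t) + 9 ≤ 0 := by nlinarith
  have := mul_nonpos_of_nonneg_of_nonpos (sub_nonneg.2 hts) hslope
  simp only
  linarith

lemma exists_cExpr2_eq_cExpr3 : {s : ℝ | phiR < s ∧ s < 2 ∧ cExpr2 s = cExpr3 s}.Nonempty := by
  have hphi : 0 < phiR * (3 - phiR) ^ 2 - (phiR ^ 2 - 1) := by
    have hsq : phiR ^ 2 = phiR + 1 := Real.goldenRatio_sq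
    have hpos : 0 < phiR * ((2 - phiR) * (4 - phiR)) := by
      have h0 : 0 < phiR := Real.goldenRatio_pos
      have h2 : phiR < 2 := Real.goldenRatio_lt_two
      exact mul_pos h0 (mul_pos (by linarith) (by linarith))
    linear_combination hpos + hsq
  obtain ⟨s, ⟨hs1, hs2⟩, hs0⟩ := intermediate_value_Ioo' Real.goldenRatio_lt_two.le
    (f := fun s : ℝ => s * (3 - s) ^ 2 - (s ^ 2 - 1)) (by fun_prop)
    (show (0 : ℝ) ∈ _ from ⟨by norm_num, hphi⟩)
  exact ⟨s, hs1, hs2, (cExpr2_eq_cExpr3_iff (one_lt_of_phiR_lt hs1) hs2.le).2 hs0⟩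

lemma mul_sq_le_of_sHat_lt {s : ℝ} (h : sHat < s) (hs2 : s ≤ 2) :
    s * (3 - s) ^ 2 ≤ s ^ 2 - 1 := by
  obtain ⟨t, ⟨ht1, ht2, ht⟩, hts⟩ := exists_lt_of_csInf_lt exists_cExpr2_eq_cExpr3 h
  have ht1 := one_lt_of_phiR_lt ht1
  have hanti := antitoneOn_crossing_polynomial ⟨ht1.le, ht2.le⟩ ⟨(ht1.trans hts).le, hs2⟩ hts.le
  exact sub_nonpos.1 (hanti.trans_eq ((cExpr2_eq_cExpr3_iff ht1 ht2.le).1 ht))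

-- `cExpr2 s` is the maximum over `d` of `(s - d) * (s * d + 1) / ((s ^ 2 - 1) * (1 + d))`,
-- attained where the square in the proof vanishes.
lemma mul_le_cExpr2_mul {s : ℝ} (hs : 1 < s) (d : ℝ) :
    (s - d) * (s * d + 1) ≤ cExpr2 s * ((s ^ 2 - 1) * (1 + d)) := by
  have hq : 0 < s ^ 2 - 1 := by nlinarith
  have hsqrt : √(s * (s ^ 2 - 1)) ^ 2 = s * (s ^ 2 - 1) := Real.sq_sqrt (by positivity)
  have h2 := cExpr2_mul_sq_sub_one hs
  set w := √(s * (s ^ 2 - 1))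
  have hsquare : s * (cExpr2 s * ((s ^ 2 - 1) * (1 + d)) - (s - d) * (s * d + 1)) =
      (s * (1 + d) - w) ^ 2 := by
    linear_combination s * (1 + d) * h2 - hsqrt
  exact sub_nonneg.1 (nonneg_of_mul_nonneg_right (hsquare ▸ sq_nonneg _) (by linarith))

-- Beyond `sHat` the maximiser leaves the interval `[0, 2 - s]`, and `cExpr3 s` is the value of
-- the same quotient at the endpoint `d = 2 - s`.
lemma mul_le_cExpr3_mul {s d : ℝ} (hs : 1 < s) (hs2 : s ≤ 2) (hhat : sHat < s) (hd : d ≤ 2 - s) :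
    (s - d) * (s * d + 1) ≤ cExpr3 s * ((s ^ 2 - 1) * (1 + d)) := by
  have h3 := cExpr3_mul_sq_sub_one hs hs2
  have hslope : s * (1 + d) * (3 - s) ≤ s ^ 2 - 1 := by
    calc s * (1 + d) * (3 - s) ≤ s * (3 - s) * (3 - s) := by gcongr <;> linarith
      _ = s * (3 - s) ^ 2 := by ring
      _ ≤ s ^ 2 - 1 := mul_sq_le_of_sHat_lt hhat hs2
  have hfactor : (cExpr3 s * ((s ^ 2 - 1) * (1 + d)) - (s - d) * (s * d + 1)) * (3 - s) =
      (2 - s - d) * (s ^ 2 - 1 - s * (1 + d) * (3 - s)) := by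
    linear_combination (1 + d) * h3
  have := mul_nonneg (sub_nonneg.2 hd) (sub_nonneg.2 hslope)
  exact sub_nonneg.1 (nonneg_of_mul_nonneg_left (hfactor ▸ this) (by linarith))

lemma mul_le_cFun_mul {s d : ℝ} (h : phiR < s) (hs2 : s ≤ 2) (hd : d ≤ 2 - s) :
    (s - d) * (s * d + 1) ≤ cFun s * ((s ^ 2 - 1) * (1 + d)) := by
  have hs := one_lt_of_phiR_lt h
  rw [cFun, if_neg h.not_ge]
  split_ifs with hhat
  · exact mul_le_cExpr2_mul hs d
  · exact mul_le_cExpr3_mul hs hs2 (not_le.1 hhat) hd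

lemma cFun_pos {s : ℝ} (h : phiR < s) (hs2 : s ≤ 2) : 0 < cFun s := by
  have hs := one_lt_of_phiR_lt h
  have := mul_le_cFun_mul h hs2 (sub_nonneg.2 hs2)
  exact pos_of_mul_pos_left (b := s ^ 2 - 1) (by linarith) (by nlinarith)

end BoundFunction

section WeightInequalities

variable {s x y z : ℝ}

-- The two width bounds `h1` and `h2` are combined with multipliers chosen so that the
-- coefficients of `α` and `β` on the smaller side agree.
lemma mul_le_width_mul {α β A B T w : ℝ} (hy : 0 < y) (hyx : y ≤ x) (hz : 0 ≤ z)
    (hxyz : s * (x - y) ≤ z) (hzxy : z ≤ s * (x + y)) (hα : 0 ≤ α) (hβ : 0 ≤ β)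
    (hA : s * x - z ≤ s * (A * y)) (hB : s * y - z ≤ s * (B * x)) (hT : T ≤ α + β)
    (h1 : T + s * (α + β * A) ≤ w) (h2 : s * (α + β + β * A + α * B) ≤ w) :
    T * ((s * (x + y) - z) * (z + (x - y))) ≤ w * (y * (s * (x - y) + z)) := by
  have hx : 0 ≤ x := hy.le.trans hyx
  have hN : 0 ≤ s * (x + y) - z := sub_nonneg.2 hzxy
  have h1' : y * (T + s * α) + β * (s * x - z) ≤ w * y := by
    linarith [mul_le_mul_of_nonneg_right h1 hy.le, mul_le_mul_of_nonneg_left hA hβ]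
  have h2' : s * (α + β) * (x * y) + β * x * (s * x - z) + α * y * (s * y - z)
      ≤ w * (x * y) := by
    linarith [mul_le_mul_of_nonneg_right h2 (mul_nonneg hx hy.le),
      mul_le_mul_of_nonneg_left hA (mul_nonneg hβ hx),
      mul_le_mul_of_nonneg_left hB (mul_nonneg hα hy.le)]
  have h1k := mul_le_mul_of_nonneg_left h1' (mul_nonneg (sub_nonneg.2 hyx) hN)
  have h2k := mul_le_mul_of_nonneg_left h2' (sub_nonneg.2 hxyz)
  have hTN := mul_le_mul_of_nonneg_right hT (mul_nonneg hy.le (mul_nonneg hN hz))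
  refine le_of_mul_le_mul_left ?_ hy
  linarith

lemma two_mul_le_cFun_mul (h : phiR < s) (hy : 0 < y) (hz : 0 < z) (hyx : y ≤ x)
    (hsx : s * x ≤ y + z) (hsz : s * z ≤ x + y) :
    2 * (y * (s * (x - y) + z)) ≤ cFun s * ((s * (x + y) - z) * (z + (x - y))) := by
  have hs := one_lt_of_phiR_lt h
  obtain ⟨d, rfl⟩ : ∃ d, x = y + d * z := ⟨(x - y) / z, by field_simp; ring⟩
  have hd : 0 ≤ d := nonneg_of_mul_nonneg_left (by linarith) hz
  have hsd : s * d ≤ 1 := by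
    refine le_of_mul_le_mul_right ?_ hz
    linarith [mul_pos (sub_pos.2 hs) hy]
  have hds : d ≤ 2 - s := by
    have : (s + 1) * d * z ≤ (s + 1) * (2 - s) * z := by
      linarith [mul_le_mul_of_nonneg_left hsz (sub_nonneg.2 hs.le)]
    exact le_of_mul_le_mul_left (le_of_mul_le_mul_right this hz) (by linarith)
  have hy2 : (s ^ 2 - 1) * (2 * y) ≤ (s - d) * (s * (y + d * z + y) - z) := by
    linarith [mul_nonneg (sub_nonneg.2 hsd) (sub_nonneg.2 hsz)]
  have hN : 0 ≤ s * (y + d * z + y) - z := by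
    linarith [mul_le_mul_of_nonneg_left hsz (by linarith : 0 ≤ s),
      mul_le_mul_of_nonneg_right (by nlinarith : 1 ≤ s * s) hz.le]
  refine le_of_mul_le_mul_left ?_ (by nlinarith : 0 < s ^ 2 - 1)
  calc (s ^ 2 - 1) * (2 * (y * (s * (y + d * z - y) + z)))
      = (s ^ 2 - 1) * (2 * y) * ((s * d + 1) * z) := by ring
    _ ≤ (s - d) * (s * (y + d * z + y) - z) * ((s * d + 1) * z) := by gcongr
    _ = (s - d) * (s * d + 1) * ((s * (y + d * z + y) - z) * z) := by ring
    _ ≤ cFun s * ((s ^ 2 - 1) * (1 + d)) * ((s * (y + d * z + y) - z) * z) :=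
        mul_le_mul_of_nonneg_right (mul_le_cFun_mul h (by linarith) hds) (mul_nonneg hN hz.le)
    _ = (s ^ 2 - 1) * (cFun s * ((s * (y + d * z + y) - z) * (z + (y + d * z - y)))) := by ring

end WeightInequalities

namespace IsContactSystem

section General

variable {ι : Type*} [Fintype ι] {E : Type*} [NormedAddCommGroup E] [InnerProductSpace ℝ E]
  {K : Set E} {s : ℝ} {a p : ι → E} {L : ι → ℝ}

lemma reindex {κ : Type*} [Fintype κ] (h : IsContactSystem K s a p L) (e : κ ≃ ι) :
    IsContactSystem K s (a ∘ e) (p ∘ e) (L ∘ e) where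
  weight_mem := ⟨fun i => h.weight_mem.1 (e i), (e.sum_comp L).trans h.weight_mem.2⟩
  sum_smul_eq_zero := (e.sum_comp fun i => L i • a i).trans h.sum_smul_eq_zero
  inner_le_one i := h.inner_le_one (e i)
  neg_smul_mem i := h.neg_smul_mem (e i)
  inner_eq_one i := h.inner_eq_one (e i)

lemma neg_one_le_mul_inner (h : IsContactSystem K s a p L) (i j : ι) :
    -1 ≤ s * ⟪a i, p j⟫ := by
  have := h.inner_le_one i _ (h.neg_smul_mem j)
  rw [inner_neg_right, real_inner_smul_right] at this
  linarith

lemma sum_mul_inner (h : IsContactSystem K s a p L) (x : E) : ∑ i, L i * ⟪a i, x⟫ = 0 := by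
  simpa [sum_inner, real_inner_smul_left] using congrArg (⟪·, x⟫) h.sum_smul_eq_zero

lemma weight_mul_le_one (h : IsContactSystem K s a p L) (i : ι) : L i * (1 + s) ≤ 1 := by
  have hnonneg : ∀ j ∈ Finset.univ, 0 ≤ L j * (1 + s * ⟪a j, p i⟫) := fun j _ =>
    mul_nonneg (h.weight_mem.1 j) (by linarith [h.neg_one_le_mul_inner j i])
  calc L i * (1 + s) = L i * (1 + s * ⟪a i, p i⟫) := by rw [h.inner_eq_one, mul_one]
    _ ≤ ∑ j, L j * (1 + s * ⟪a j, p i⟫) := Finset.single_le_sum hnonneg (Finset.mem_univ i)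
    _ = ∑ j, L j + s * ∑ j, L j * ⟪a j, p i⟫ := by
        rw [Finset.mul_sum, ← Finset.sum_add_distrib]
        exact Finset.sum_congr rfl fun j _ => by ring
    _ = 1 := by rw [h.sum_mul_inner, h.weight_mem.2, mul_zero, add_zero]

lemma add_one_le_card (h : IsContactSystem K s a p L) : 1 + s ≤ Fintype.card ι := by
  calc 1 + s = ∑ i, L i * (1 + s) := by rw [← Finset.sum_mul, h.weight_mem.2, one_mul]
    _ ≤ ∑ _ : ι, (1 : ℝ) := Finset.sum_le_sum fun i _ => h.weight_mul_le_one i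
    _ = Fintype.card ι := by simp

lemma weight_pos (h : IsContactSystem K s a p L) (hs : Fintype.card ι < s + 2) (i : ι) :
    0 < L i := by
  classical
  have hcard : (1 : ℝ) ≤ Fintype.card ι := by exact_mod_cast Fintype.card_pos_iff.2 ⟨i⟩
  have hothers : ∑ j ∈ Finset.univ.erase i, L j * (1 + s) ≤ Fintype.card ι - 1 := by
    refine (Finset.sum_le_card_nsmul _ _ 1 fun j _ => h.weight_mul_le_one j).trans_eq ?_
    simp [Finset.card_erase_of_mem, Nat.cast_sub (Fintype.card_pos_iff.2 ⟨i⟩)]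
  have hsum : L i * (1 + s) + ∑ j ∈ Finset.univ.erase i, L j * (1 + s) = 1 + s := by
    rw [Finset.add_sum_erase _ (fun j => L j * (1 + s)) (Finset.mem_univ i),
      ← Finset.sum_mul, h.weight_mem.2, one_mul]
  exact pos_of_mul_pos_left (b := 1 + s) (by linarith) (by linarith)

end General

section Triple

variable {E : Type*} [NormedAddCommGroup E] [InnerProductSpace ℝ E]
  {K : Set E} {s : ℝ} {a p : Fin 3 → E} {L : Fin 3 → ℝ}

lemma sum_weight_eq_one (h : IsContactSystem K s a p L) : L 0 + L 1 + L 2 = 1 := by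
  rw [← Fin.sum_univ_three, h.weight_mem.2]

lemma le_two (h : IsContactSystem K s a p L) : s ≤ 2 := by
  have := h.add_one_le_card
  norm_num at this
  linarith

lemma mul_weight_sub_le (h : IsContactSystem K s a p L) :
    s * L 0 - L 1 ≤ s * (-⟪a 2, p 0⟫ * L 2) := by
  have hsum := h.sum_mul_inner (p 0)
  rw [Fin.sum_univ_three, h.inner_eq_one] at hsum
  linarith [mul_le_mul_of_nonneg_left (h.neg_one_le_mul_inner 1 0) (h.weight_mem.1 1),
    congrArg (s * ·) hsum]

lemma abs_inner_lt_one (h : IsContactSystem K s a p L) (hs : 1 < s) : |⟪a 2, p 0⟫| < 1 := by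
  have hsum := h.sum_weight_eq_one
  have hweight := h.mul_weight_sub_le
  have hle := h.weight_mul_le_one 1
  have hmul := h.neg_one_le_mul_inner 2 0
  have hpos := h.weight_pos (by norm_num; linarith) 2
  refine abs_lt.2 ⟨by nlinarith, ?_⟩
  by_contra! hge
  nlinarith [mul_le_mul_of_nonneg_right hge hpos.le]

lemma linearIndependent_pair (h : IsContactSystem K s a p L) (hs : 1 < s) :
    LinearIndependent ℝ ![a 0, a 2] := by
  have h20 := h.abs_inner_lt_one hs
  have h02 : |⟪a 0, p 2⟫| < 1 := (h.reindex (Equiv.swap 0 2)).abs_inner_lt_one hs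
  refine LinearIndependent.pair_iff.2 fun α β hαβ => ?_
  have hp0 := congrArg (⟪·, p 0⟫) hαβ
  have hp2 := congrArg (⟪·, p 2⟫) hαβ
  simp only [inner_add_left, real_inner_smul_left, h.inner_eq_one, inner_zero_left,
    mul_one] at hp0 hp2
  have hdet : 0 < 1 - ⟪a 2, p 0⟫ * ⟪a 0, p 2⟫ := by
    have := abs_mul ⟪a 2, p 0⟫ ⟪a 0, p 2⟫ ▸ mul_lt_one_of_nonneg_of_lt_one_left
      (abs_nonneg _) h20 h02.le
    linarith [le_abs_self (⟪a 2, p 0⟫ * ⟪a 0, p 2⟫)]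
  constructor
  · refine (mul_eq_zero.1 ?_).resolve_right hdet.ne'
    linear_combination hp0 - ⟪a 2, p 0⟫ * hp2
  · refine (mul_eq_zero.1 ?_).resolve_right hdet.ne'
    linear_combination hp2 - ⟪a 0, p 2⟫ * hp0

-- Subtracting the median of the coefficients relative to `L` leaves only two normals.
lemma exists_perm_eq_smul_sub_smul (h : IsContactSystem K s a p L) (hs : 1 < s)
    (hE : Module.finrank ℝ E = 2) (v : E) :
    ∃ (σ : Equiv.Perm (Fin 3)) (α β : ℝ), 0 ≤ α ∧ 0 ≤ β ∧ v = α • a (σ 2) - β • a (σ 0) := by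
  have : FiniteDimensional ℝ E := Module.finite_of_finrank_eq_succ hE
  have hspan : v ∈ Submodule.span ℝ (range ![a 0, a 2]) := by
    rw [(h.linearIndependent_pair hs).span_eq_top_of_card_eq_finrank' (by simp [hE])]
    trivial
  rw [Matrix.range_cons, Matrix.range_cons, Matrix.range_empty, union_empty,
    ← insert_eq, Submodule.mem_span_pair] at hspan
  obtain ⟨b₀, b₂, rfl⟩ := hspan
  have hpos := h.weight_pos (by norm_num; linarith)
  set c : Fin 3 → ℝ := ![b₀ / L 0, 0, b₂ / L 2] with hc
  set σ := Tuple.sort c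
  have hmono : Monotone (c ∘ σ) := Tuple.monotone_sort c
  have hv : b₀ • a 0 + b₂ • a 2 = ∑ i, (c i * L i) • a i := by
    simp [Fin.sum_univ_three, hc, div_mul_cancel₀ _ (hpos _).ne']
  have hshift : ∑ i, (c i * L i) • a i = ∑ i, ((c i - c (σ 1)) * L i) • a i := by
    simp_rw [sub_mul, sub_smul, Finset.sum_sub_distrib, mul_smul (c (σ 1)), ← Finset.smul_sum,
      h.sum_smul_eq_zero, smul_zero, sub_zero]
  refine ⟨σ, (c (σ 2) - c (σ 1)) * L (σ 2), (c (σ 1) - c (σ 0)) * L (σ 0),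
    mul_nonneg (sub_nonneg.2 (hmono (by decide))) (h.weight_mem.1 _),
    mul_nonneg (sub_nonneg.2 (hmono (by decide))) (h.weight_mem.1 _), ?_⟩
  rw [hv, hshift, ← Equiv.sum_comp σ, Fin.sum_univ_three]
  module

lemma two_mul_inner_le_of_weight_le (h : IsContactSystem K s a p L) (hs : phiR < s)
    (hL : L 0 ≤ L 2) {α β : ℝ} (hα : 0 ≤ α) (hβ : 0 ≤ β) {v z : E}
    (hv : v = α • a 2 - β • a 0) (hz : z ∈ K) (hz' : -z ∈ K) {w : ℝ}
    (hw : ∀ x ∈ K, ∀ y ∈ K, ⟪v, x⟫ - ⟪v, y⟫ ≤ w) : 2 * ⟪v, z⟫ ≤ cFun s * w := by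
  have hs1 := one_lt_of_phiR_lt hs
  have hpos := h.weight_pos (by norm_num; linarith)
  have h0 := hpos 0
  have h1 := hpos 1
  have hsum := h.sum_weight_eq_one
  have hle1 := h.weight_mul_le_one 1
  have hle2 := h.weight_mul_le_one 2
  have hA : s * L 2 - L 1 ≤ s * (-⟪a 0, p 2⟫ * L 0) :=
    (h.reindex (Equiv.swap 0 2)).mul_weight_sub_le
  have hinner (x : E) : ⟪v, x⟫ = α * ⟪a 2, x⟫ - β * ⟪a 0, x⟫ := by
    rw [hv, inner_sub_left, real_inner_smul_left, real_inner_smul_left]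
  have hT : ⟪v, z⟫ ≤ α + β := by
    have hza := mul_le_mul_of_nonneg_left (h.inner_le_one 2 z hz) hα
    have hza' := mul_le_mul_of_nonneg_left (h.inner_le_one 0 (-z) hz') hβ
    rw [inner_neg_right] at hza'
    linarith [hinner z]
  have hw1 := hw z hz _ (h.neg_smul_mem 2)
  have hw2 := hw _ (h.neg_smul_mem 0) _ (h.neg_smul_mem 2)
  simp only [inner_neg_right, real_inner_smul_right, hinner (p _), h.inner_eq_one] at hw1 hw2
  have hwidth := mul_le_width_mul (w := w) h0 hL h1.le
    (by nlinarith) (by nlinarith) hα hβ hA h.mul_weight_sub_le hT (by linarith) (by linarith)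
  have hcFun := two_mul_le_cFun_mul hs h0 h1 hL (by linarith) (by linarith)
  have hw0 : 0 ≤ w := by simpa using hw z hz z hz
  have hN : 0 < (s * (L 2 + L 0) - L 1) * (L 1 + (L 2 - L 0)) :=
    mul_pos (by nlinarith) (by linarith)
  refine le_of_mul_le_mul_right ?_ hN
  linarith [mul_le_mul_of_nonneg_left hcFun hw0]

lemma two_mul_inner_le (h : IsContactSystem K s a p L) (hs : phiR < s) {α β : ℝ}
    (hα : 0 ≤ α) (hβ : 0 ≤ β) {v z : E} (hv : v = α • a 2 - β • a 0) (hz : z ∈ K)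
    (hz' : -z ∈ K) {w : ℝ} (hw : ∀ x ∈ K, ∀ y ∈ K, ⟪v, x⟫ - ⟪v, y⟫ ≤ w) :
    2 * ⟪v, z⟫ ≤ cFun s * w := by
  rcases le_total (L 0) (L 2) with hL | hL
  · exact h.two_mul_inner_le_of_weight_le hs hL hα hβ hv hz hz' hw
  · have := (h.reindex (Equiv.swap 0 2)).two_mul_inner_le_of_weight_le hs hL hβ hα
      (v := -v) (z := -z) (by simp [hv]) hz' (by rwa [neg_neg])
      fun x hx y hy => by simpa [add_comm, sub_eq_add_neg] using hw y hy x hx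
    rwa [inner_neg_neg] at this

lemma inter_neg_subset (h : IsContactSystem K s a p L) (hE : Module.finrank ℝ E = 2)
    (hconv : Convex ℝ K) (hK : IsCompact K) (hs : phiR < s) :
    K ∩ -K ⊆ cFun s • ((2 : ℝ)⁻¹ • (K - K)) := by
  have : FiniteDimensional ℝ E := Module.finite_of_finrank_eq_succ hE
  have hne : K.Nonempty := ⟨_, h.neg_smul_mem 0⟩
  have hs1 := one_lt_of_phiR_lt hs
  rintro z ⟨hz, hz'⟩
  have hKK : IsCompact (K - K) := sub_eq_add_neg K K ▸ hK.add hK.neg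
  refine mem_of_forall_inner_le_supportFun (((hconv.sub hconv).smul _).smul _)
    ((hKK.smul _).smul _) (hne.sub hne).smul_set.smul_set fun v _ => ?_
  obtain ⟨σ, α, β, hα, hβ, hv⟩ := h.exists_perm_eq_smul_sub_smul hs1 hE v
  have hwidth := (h.reindex σ).two_mul_inner_le hs hα hβ hv hz hz'
    (w := supportFun K v + supportFun K (-v)) fun x hx y hy => by
      have := inner_le_supportFun hK (-v) hy
      rw [inner_neg_left] at this
      linarith [inner_le_supportFun hK v hx]
  rw [supportFun_smul (cFun_pos hs h.le_two).le, supportFun_smul (by norm_num),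
    supportFun_sub hK hne hK hne]
  linarith

end Triple

end IsContactSystem

section Minkowski

variable {V : Type*} [AddCommGroup V] [Module ℝ V]

lemma inter_neg_subset_half_sub (K : Set V) : K ∩ -K ⊆ (2 : ℝ)⁻¹ • (K - K) := by
  rintro z ⟨hz, hz'⟩
  refine ⟨z - -z, sub_mem_sub hz hz', ?_⟩
  simp only [sub_neg_eq_add]
  module

lemma inv_smul_subset_inter_neg {K : Set V} {s : ℝ} (hconv : Convex ℝ K) (h0 : (0 : V) ∈ K)
    (hs : 1 ≤ s) (hsub : K ⊆ s • -K) : s⁻¹ • K ⊆ K ∩ -K := by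
  have hs0 : 0 < s := by linarith
  rintro _ ⟨x, hx, rfl⟩
  refine ⟨hconv.smul_mem_of_zero_mem h0 hx ⟨by positivity, inv_le_one_of_one_le₀ hs⟩, ?_⟩
  exact (mem_smul_set_iff_inv_smul_mem₀ hs0.ne' _ _).1 (hsub hx)

variable {E : Type*} [NormedAddCommGroup E] [InnerProductSpace ℝ E] [CompleteSpace E]
  {K : Set E} {s : ℝ}

lemma zero_mem_of_subset_smul_neg (hconv : Convex ℝ K) (hK : IsCompact K)
    (hint : (interior K).Nonempty) (hs : 0 ≤ s) (hsub : K ⊆ s • -K) : (0 : E) ∈ K := by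
  refine mem_of_forall_inner_le_supportFun hconv hK (hint.mono interior_subset) fun u hu => ?_
  rw [inner_zero_right]
  exact (supportFun_pos_of_subset_smul_neg hK hint hs hsub (norm_ne_zero_iff.1 (by simp [hu]))).le

-- If `ρ * s < 2`, the inclusion `s⁻¹ • K ⊆ ρ • ((K - K) / 2)` bounds the asymmetry of `K` about
-- the origin by `ρ * s / (2 - ρ * s)`.
lemma two_le_mul_add_one_of_inter_neg_subset [Nontrivial E] (hconv : Convex ℝ K)
    (hK : IsCompact K) (hint : (interior K).Nonempty) (hs : 0 ≤ s) (hsub : K ⊆ s • -K)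
    (hmin : ∀ ρ, 0 < ρ → ∀ c, K - {c} ⊆ ρ • ({c} - K) → s ≤ ρ) {ρ : ℝ} (hρ : 0 < ρ)
    (h : K ∩ -K ⊆ ρ • ((2 : ℝ)⁻¹ • (K - K))) : 2 ≤ ρ * (s + 1) := by
  have hs1 : 1 ≤ s := one_le_of_subset_smul_neg hK hint hs hsub
  have hne : K.Nonempty := hint.mono interior_subset
  rcases le_or_gt 2 (ρ * s) with hρs | hρs
  · linarith
  have hKK : IsCompact (K - K) := sub_eq_add_neg K K ▸ hK.add hK.neg
  have hsupp (u : E) : (2 - ρ * s) * supportFun K u ≤ ρ * s * supportFun K (-u) := by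
    have := supportFun_mono ((hKK.smul _).smul _) hne.smul_set
      ((inv_smul_subset_inter_neg hconv (zero_mem_of_subset_smul_neg hconv hK hint hs hsub)
        hs1 hsub).trans h) u
    rw [supportFun_smul (by positivity), supportFun_smul hρ.le, supportFun_smul (by norm_num),
      supportFun_sub hK hne hK hne, inv_mul_le_iff₀ (by linarith)] at this
    linarith
  have hle : s ≤ ρ * s / (2 - ρ * s) := by
    refine hmin _ (div_pos (by positivity) (by linarith)) 0 <|
      sub_singleton_subset_of_supportFun_le hconv hK hne
        (div_nonneg (by positivity) (by linarith)) fun u _ => ?_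
    rw [inner_zero_right, add_zero, sub_zero, div_mul_eq_mul_div, le_div_iff₀ (by linarith)]
    have := hsupp (-u)
    rw [neg_neg] at this
    linarith
  rw [le_div_iff₀ (by linarith)] at hle
  refine le_of_mul_le_mul_left ?_ (by linarith : 0 < s)
  linarith

end Minkowski

lemma minkAsym_nonneg (K : Set E2) : 0 ≤ minkAsym K :=
  Real.sInf_nonneg fun _ hρ => hρ.1.le

lemma minkAsym_le {K : Set E2} {ρ : ℝ} (hρ : 0 < ρ) (c : E2) (h : K - {c} ⊆ ρ • ({c} - K)) :
    minkAsym K ≤ ρ :=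
  csInf_le ⟨0, fun _ hσ => hσ.1.le⟩ ⟨hρ, c, h⟩

lemma tauB_le {K : Set E2} {ρ : ℝ} (hρ : 0 < ρ) (h : K ∩ -K ⊆ ρ • ((2 : ℝ)⁻¹ • (K - K))) :
    tauB K ≤ ρ :=
  csInf_le ⟨0, fun _ hσ => hσ.1.le⟩ ⟨hρ, h⟩

lemma two_div_le_tauB {K : Set E2} (hK : IsConvexBody K) (hc : MinkCentered K) :
    2 / (minkAsym K + 1) ≤ tauB K := by
  obtain ⟨hconv, hcomp, hint⟩ := hK
  have hs := minkAsym_nonneg K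
  refine le_csInf ⟨1, one_pos, by simpa only [one_smul] using inter_neg_subset_half_sub K⟩
    fun ρ ⟨hρ, hsub⟩ => ?_
  rw [div_le_iff₀ (by linarith)]
  exact two_le_mul_add_one_of_inter_neg_subset hconv hcomp hint hs hc
    (fun _ => minkAsym_le) hρ hsub

lemma tauB_le_cFun {K : Set E2} (hK : IsConvexBody K) (hc : MinkCentered K) :
    tauB K ≤ cFun (minkAsym K) := by
  obtain ⟨hconv, hcomp, hint⟩ := hK
  rcases le_or_gt (minkAsym K) phiR with hs | hs
  · rw [cFun, if_pos hs]
    exact tauB_le one_pos (by simpa only [one_smul] using inter_neg_subset_half_sub K)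
  · obtain ⟨a, p, L, h⟩ := exists_isContactSystem (ι := Fin 3) (by simp) hconv hcomp hint
      (by linarith [one_lt_of_phiR_lt hs]) hc fun _ => minkAsym_le
    exact tauB_le (cFun_pos hs h.le_two) (h.inter_neg_subset (by simp) hconv hcomp hs)

theorem stmt4 (K : Set E2) (hK : IsConvexBody K) (hc : MinkCentered K) :
    2 / (minkAsym K + 1) ≤ tauB K ∧ tauB K ≤ cFun (minkAsym K) :=
  ⟨two_div_le_tauB hK hc, tauB_le_cFun hK hc⟩
end
end

section
/- Let u₁, …, u₆ ∈ ℝ² \ {0} satisfy u_{i+3} = −u_i for i = 1,2,3 and det(u_i, u_{i+1}) > 0 for all i (indices mod 6), so that the six cones pos{u_i, u_{i+1}} are the six sectors into which the three distinct lines through 0 spanned by u₁, u₂, u₃ divide the plane. If p¹ ∈ pos{u₁, u₂}, p² ∈ pos{u₃, u₄} and p³ ∈ pos{u₅, u₆}, then 0 ∈ conv{p¹, p², p³}. -/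
open scoped Pointwise RealInnerProductSpace
open Set

noncomputable section

/-!
If `0` were not in the convex hull, some continuous linear functional `f` would be positive on all
three points, hence on a generator of each of the cones `pos{u₀, u₁}`, `pos{u₂, -u₀}` and
`pos{-u₁, -u₂}`. If `f u₁ > 0`, the third cone gives `f u₂ < 0` and then the second `f u₀ < 0`; if
`f u₁ < 0`, the first gives `f u₀ > 0` and then the second `f u₂ > 0`. Both are impossible because
`u₁` lies between `u₀` and `u₂`. If `f u₁ = 0`, then `f u₀ > 0` and `f u₂ < 0`, against the second
cone.
-/

section ConeHull

variable {R E : Type*} [Ring R] [LinearOrder R] [IsOrderedRing R] [AddCommGroup E] [Module R E]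

theorem exists_pos_of_mem_pointedCone_hull (f : E →ₗ[R] R) {s : Set E} {x : E}
    (hx : x ∈ PointedCone.hull R s) (hfx : 0 < f x) : ∃ y ∈ s, 0 < f y := by
  contrapose! hfx
  induction hx using Submodule.span_induction with
  | mem y hy => exact hfx y hy
  | zero => exact (map_zero f).le
  | add y z _ _ hy hz => exact (map_add f y z).trans_le (add_nonpos hy hz)
  | smul c y _ hy => exact (map_smul f (c : R) y).trans_le (mul_nonpos_of_nonneg_of_nonpos c.2 hy)

theorem pos_or_pos_of_mem_pointedCone_hull_pair (f : E →ₗ[R] R) {a b x : E}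
    (hx : x ∈ PointedCone.hull R {a, b}) (hfx : 0 < f x) : 0 < f a ∨ 0 < f b := by
  simpa using exists_pos_of_mem_pointedCone_hull f hx hfx

end ConeHull

section Separation

variable {E : Type*} [AddCommGroup E] [Module ℝ E] [TopologicalSpace E] [IsTopologicalAddGroup E]
  [ContinuousSMul ℝ E] [LocallyConvexSpace ℝ E] [T2Space E]

theorem exists_forall_pos_of_zero_notMem_convexHull {s : Set E} (hs : s.Finite)
    (h0 : (0 : E) ∉ convexHull ℝ s) : ∃ f : StrongDual ℝ E, ∀ x ∈ s, 0 < f x := by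
  obtain ⟨f, r, hr, hf⟩ := geometric_hahn_banach_point_closed (convex_convexHull ℝ s)
    (hs.isClosed_convexHull ℝ) h0
  rw [map_zero] at hr
  exact ⟨f, fun x hx ↦ hr.trans (hf x (subset_convexHull ℝ s hx))⟩

theorem stmt6_general {u₀ u₁ u₂ p₁ p₂ p₃ : E} (hu : u₁ ∈ PointedCone.hull ℝ {u₀, u₂})
    (h₁ : p₁ ∈ PointedCone.hull ℝ {u₀, u₁}) (h₂ : p₂ ∈ PointedCone.hull ℝ {u₂, -u₀})
    (h₃ : p₃ ∈ PointedCone.hull ℝ {-u₁, -u₂}) : (0 : E) ∈ convexHull ℝ {p₁, p₂, p₃} := by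
  by_contra h0
  obtain ⟨f, hf⟩ := exists_forall_pos_of_zero_notMem_convexHull (by simp) h0
  have first : 0 < f u₀ ∨ 0 < f u₁ :=
    pos_or_pos_of_mem_pointedCone_hull_pair f.toLinearMap h₁ (hf p₁ (by simp))
  have second : 0 < f u₂ ∨ f u₀ < 0 := by
    simpa using pos_or_pos_of_mem_pointedCone_hull_pair f.toLinearMap h₂ (hf p₂ (by simp))
  have third : f u₁ < 0 ∨ f u₂ < 0 := by
    simpa using pos_or_pos_of_mem_pointedCone_hull_pair f.toLinearMap h₃ (hf p₃ (by simp))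
  have between_pos : 0 < f u₁ → 0 < f u₀ ∨ 0 < f u₂ :=
    pos_or_pos_of_mem_pointedCone_hull_pair f.toLinearMap hu
  have between_neg : f u₁ < 0 → f u₀ < 0 ∨ f u₂ < 0 := by
    simpa using pos_or_pos_of_mem_pointedCone_hull_pair (-f.toLinearMap) hu
  grind

end Separation

theorem posHull2_eq_pointedCone_hull (a b : E2) :
    posHull2 a b = (PointedCone.hull ℝ {a, b} : Set E2) := by
  ext x
  simp only [posHull2, mem_ofPred_eq, SetLike.mem_coe, Submodule.mem_span_pair]
  constructor
  · rintro ⟨α, β, hα, hβ, rfl⟩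
    exact ⟨⟨α, hα⟩, ⟨β, hβ⟩, rfl⟩
  · rintro ⟨α, β, rfl⟩
    exact ⟨α, β, α.2, β.2, rfl⟩

/-- The determinant of the `2 × 2` matrix with columns `a` and `b`, positive when `b` is
counterclockwise from `a` by an angle less than `π`. -/
def planeDet (a b : E2) : ℝ := a 0 * b 1 - a 1 * b 0

theorem planeDet_neg_right_eq_swap (a b : E2) : planeDet a (-b) = planeDet b a := by
  simp only [planeDet, PiLp.neg_apply]
  ring

theorem planeDet_smul_eq_add (a b c : E2) :
    planeDet a c • b = planeDet b c • a + planeDet a b • c := by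
  ext i
  fin_cases i <;> simp [planeDet] <;> ring

theorem mem_posHull2_of_planeDet_nonneg {a b c : E2} (hac : 0 < planeDet a c)
    (hab : 0 ≤ planeDet a b) (hbc : 0 ≤ planeDet b c) : b ∈ posHull2 a c := by
  refine ⟨planeDet b c / planeDet a c, planeDet a b / planeDet a c, by positivity,
    by positivity, ?_⟩
  rw [div_eq_inv_mul, div_eq_inv_mul, mul_smul, mul_smul, ← smul_add, ← planeDet_smul_eq_add,
    inv_smul_smul₀ hac.ne']

theorem stmt6 (u : Fin 6 → E2) (hne : ∀ i, u i ≠ 0)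
    (hopp0 : u 3 = -u 0) (hopp1 : u 4 = -u 1) (hopp2 : u 5 = -u 2)
    (hdet : ∀ i : Fin 6, 0 < u i 0 * u (i + 1) 1 - u i 1 * u (i + 1) 0)
    (p1 p2 p3 : E2)
    (h1 : p1 ∈ posHull2 (u 0) (u 1))
    (h2 : p2 ∈ posHull2 (u 2) (u 3))
    (h3 : p3 ∈ posHull2 (u 4) (u 5)) :
    (0 : E2) ∈ convexHull ℝ {p1, p2, p3} := by
  have hu : u 1 ∈ posHull2 (u 0) (u 2) := by
    have h02 : 0 < planeDet (u 2) (u 3) := hdet 2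
    rw [hopp0, planeDet_neg_right_eq_swap] at h02
    exact mem_posHull2_of_planeDet_nonneg h02 (hdet 0).le (hdet 1).le
  rw [hopp0] at h2
  rw [hopp1, hopp2] at h3
  simp only [posHull2_eq_pointedCone_hull, SetLike.mem_coe] at hu h1 h2 h3
  exact stmt6_general hu h1 h2 h3
end
end
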